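/- arXiv:1908.01954 — 2 statements merged into one kernel-verified Lean document; each statement's English description precedes it below -/
import Mathlib

section
/- Let d ≥ 3, u > 0. There exists T₀(u) ∈ (0,1) such that for all 0 < T < T₀, the expected number of open self-avoiding paths of length n starting at the origin in FI^{u,T} is at most (2d)^n·(2(3d)^{-n} + (3d)^{-n-1}), which tends to 0 as n → ∞; consequently the origin is almost surely not in an infinite cluster of FI^{u,T}. -/
open MeasureTheory Real Filter ENNReal

noncomputable section

/-- A finite path in `ℤ^d`: a length `n` together with `n+1` vertices. -/
abbrev PrePath (d : ℕ) := Σ n : ℕ, (Fin (n + 1) → (Fin d → ℤ))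

/-- The path is nearest-neighbor. -/
def IsNN {d : ℕ} (w : PrePath d) : Prop :=
  ∀ i : Fin w.1, (∑ j, |w.2 i.succ j - w.2 i.castSucc j|) = 1

/-- The (countable) space of finite nearest-neighbor walks in `ℤ^d`. -/
abbrev W (d : ℕ) := {w : PrePath d // IsNN w}

/-- Intensity of the FRI point process at a single walk `w`:
`u·v^{(T)}({w}) = u · (2d/(T+1)) · (1/(T+1)) (T/(T+1))^{len w} (2d)^{-len w}`. -/
def intensity (d : ℕ) (u T : ℝ) (w : W d) : ℝ :=
  u * (2 * d / (T + 1) ^ 2) * (T / ((T + 1) * (2 * d))) ^ w.1.1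

/-- `μ` is the law of the FRI point process `FI^{u,T}`: the counts of the individual walks
are independent Poisson random variables with means `u·v^{(T)}({w})`. -/
def IsFRI (d : ℕ) (u T : ℝ) (μ : Measure (W d → ℕ)) : Prop :=
  IsProbabilityMeasure μ ∧
  ∀ F : Finset (W d), ∀ g : W d → ℕ,
    μ {ω | ∀ w ∈ F, ω w = g w} =
      ∏ w ∈ F, ENNReal.ofReal
        (Real.exp (-intensity d u T w) * (intensity d u T w) ^ g w / (Nat.factorial (g w)))

/-- `w` crosses the edge `{a, b}`. -/
def Crosses {d : ℕ} (w : W d) (a b : Fin d → ℤ) : Prop :=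
  ∃ i : Fin w.1.1, (w.1.2 i.castSucc = a ∧ w.1.2 i.succ = b) ∨
    (w.1.2 i.castSucc = b ∧ w.1.2 i.succ = a)

/-- The edge `{a,b}` is open in the configuration `ω` iff some trajectory crosses it. -/
def OpenEdge {d : ℕ} (ω : W d → ℕ) (a b : Fin d → ℤ) : Prop :=
  ∃ w : W d, 1 ≤ ω w ∧ Crosses w a b

/-- The open cluster of the origin in the bond configuration induced by `ω`. -/
def Cluster {d : ℕ} (ω : W d → ℕ) : Set (Fin d → ℤ) :=
  {v | Relation.ReflTransGen (OpenEdge ω) 0 v}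

/-- Self-avoiding nearest-neighbor path of length `n` from the origin (no edge used twice). -/
def IsSAP (d n : ℕ) (p : Fin (n + 1) → (Fin d → ℤ)) : Prop :=
  p 0 = 0 ∧
  (∀ i : Fin n, (∑ j, |p i.succ j - p i.castSucc j|) = 1) ∧
  ∀ i j : Fin n, i ≠ j →
    ¬((p i.castSucc = p j.castSucc ∧ p i.succ = p j.succ) ∨
      (p i.castSucc = p j.succ ∧ p i.succ = p j.castSucc))

/-- The number `N(n)` of open self-avoiding paths of length `n` from the origin. -/
def openSAPcount (d n : ℕ) (ω : W d → ℕ) : ℕ :=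
  {p : Fin (n + 1) → (Fin d → ℤ) | IsSAP d n p ∧
    ∀ i : Fin n, OpenEdge ω (p i.castSucc) (p i.succ)}.ncard

/-- the neighbours of the origin -/
def Nb (d : ℕ) : Finset (Fin d → ℤ) :=
  (Finset.univ : Finset (Fin d × Bool)).image
    (fun q => Pi.single q.1 (if q.2 then 1 else -1))

lemma Nb_card (d : ℕ) : (Nb d).card ≤ 2 * d := by
  unfold Nb
  refine Finset.card_image_le.trans ?_
  simp [mul_comm]

lemma mem_Nb {d : ℕ} (v : Fin d → ℤ) (h : ∑ j, |v j| = 1) : v ∈ Nb d := by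
  have hex : ∃ j, v j ≠ 0 := by
    by_contra hc
    push Not at hc
    simp [hc] at h
  obtain ⟨j, hj⟩ := hex
  have h1 : 1 ≤ |v j| := Int.one_le_abs hj
  have hs := Finset.add_sum_erase Finset.univ (fun j => |v j|) (Finset.mem_univ j)
  have hnn : 0 ≤ ∑ x ∈ Finset.univ.erase j, |v x| := Finset.sum_nonneg fun _ _ => abs_nonneg _
  have h0 : ∑ x ∈ Finset.univ.erase j, |v x| = 0 := by omega
  have hv1 : |v j| = 1 := by omega
  rw [Finset.sum_eq_zero_iff_of_nonneg (fun _ _ => abs_nonneg _)] at h0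
  have hz : ∀ x, x ≠ j → v x = 0 := fun x hx =>
    abs_eq_zero.1 (h0 x (Finset.mem_erase.2 ⟨hx, Finset.mem_univ x⟩))
  unfold Nb
  rw [Finset.mem_image]
  rcases (abs_eq (by norm_num : (0:ℤ) ≤ 1)).1 hv1 with e | e
  · refine ⟨(j, true), Finset.mem_univ _, ?_⟩
    funext x
    by_cases hx : x = j
    · subst hx; simp [e]
    · simp [hx, hz x hx]
  · refine ⟨(j, false), Finset.mem_univ _, ?_⟩
    funext x
    by_cases hx : x = j
    · subst hx; simp [e]
    · simp [hx, hz x hx]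

/-- walks of length `n` which are at `a` at time `k` -/
def walksAt (d n : ℕ) (k : Fin (n + 1)) (a : Fin d → ℤ) : Set (Fin (n + 1) → (Fin d → ℤ)) :=
  {w | (∀ i : Fin n, (∑ j, |w i.succ j - w i.castSucc j|) = 1) ∧ w k = a}

lemma walksAt_encard (d n : ℕ) (k : Fin (n + 1)) (a : Fin d → ℤ) :
    (walksAt d n k a).encard ≤ ((2 * d) ^ n : ℕ) := by
  have h1 : (walksAt d n k a).encard ≤
      (SetLike.coe (Fintype.piFinset (fun _ : Fin n => Nb d)) : Set (Fin n → Fin d → ℤ)).encard := by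
    apply Set.encard_le_encard_of_injOn (f := fun w i => w i.succ - w i.castSucc)
    · intro w hw
      simp only [Finset.mem_coe, Fintype.mem_piFinset]
      intro i
      exact mem_Nb _ (hw.1 i)
    · intro w hw w' hw' he
      have hg : ∀ j : Fin (n + 1), w j - w' j = w 0 - w' 0 := by
        intro j
        induction j using Fin.induction with
        | zero => rfl
        | succ i ih =>
          rw [← ih]
          have := congrFun he i
          simp only at this
          rw [sub_eq_sub_iff_add_eq_add] at this ⊢
          rw [this, add_comm]
      have hk := hg k
      rw [hw.2, hw'.2, sub_self] at hk
      funext j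
      have := hg j
      rw [← hk] at this
      exact sub_eq_zero.1 this
  refine h1.trans ?_
  rw [Set.encard_coe_eq_coe_finsetCard, Fintype.card_piFinset]
  simp only [Finset.prod_const, Finset.card_univ, Fintype.card_fin]
  exact_mod_cast Nat.pow_le_pow_left (Nb_card d) n

lemma intensity_nonneg (d : ℕ) {u T : ℝ} (hu : 0 < u) (hT : 0 < T) (w : W d) :
    0 ≤ intensity d u T w := by
  unfold intensity
  positivity

/-- Total weight of the walks of positive length visiting `a`. -/
lemma weight_visit (d : ℕ) (hd : 3 ≤ d) {u T y : ℝ} (hu : 0 < u) (hT : 0 < T) (hy : 0 < y)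
    (hx : T * y ≤ 1 / 4) (hx2 : 8 * d * u * (T * y) ≤ 1) (a : Fin d → ℤ) :
    ∑' w : W d, (open Classical in if 1 ≤ w.1.1 ∧ ∃ k, w.1.2 k = a then
      ENNReal.ofReal (intensity d u T w * y ^ w.1.1) else 0) ≤ 1 := by
  classical
  set c : ℕ → ℝ := fun n => u * (2 * d / (T + 1) ^ 2) * (T / ((T + 1) * (2 * d))) ^ n * y ^ n with hc
  set f : PrePath d → ℝ≥0∞ := fun w => if IsNN w ∧ 1 ≤ w.1 ∧ ∃ k, w.2 k = a then
      ENNReal.ofReal (c w.1) else 0 with hf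
  have hd0 : (0:ℝ) < d := by exact_mod_cast (by omega : 0 < d)
  have e1 : ∑' w : W d, (if 1 ≤ w.1.1 ∧ ∃ k, w.1.2 k = a then
      ENNReal.ofReal (intensity d u T w * y ^ w.1.1) else 0) = ∑' w : W d, f w.1 := by
    apply tsum_congr
    intro w
    simp only [hf, w.2, true_and, hc, intensity]
  rw [e1]
  refine (ENNReal.tsum_comp_le_tsum_of_injective Subtype.val_injective f).trans ?_
  rw [ENNReal.tsum_sigma' f]
  have inner : ∀ n : ℕ, ∑' v, f ⟨n, v⟩ ≤ if 1 ≤ n then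
      ((n + 1 : ℕ) : ℝ≥0∞) * (((2 * d) ^ n : ℕ) * ENNReal.ofReal (c n)) else 0 := by
    intro n
    by_cases hn : 1 ≤ n
    · rw [if_pos hn]
      calc ∑' v, f ⟨n, v⟩ ≤ ∑' v, ∑ k : Fin (n + 1),
            (walksAt d n k a).indicator (fun _ => ENNReal.ofReal (c n)) v := by
            apply ENNReal.tsum_le_tsum
            intro v
            by_cases hv : IsNN (⟨n, v⟩ : PrePath d) ∧ 1 ≤ n ∧ ∃ k, v k = a
            · simp only [hf]
              rw [if_pos hv]
              obtain ⟨h1, -, k, hk⟩ := hv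
              refine le_trans ?_ (Finset.single_le_sum (f := fun k : Fin (n + 1) =>
                (walksAt d n k a).indicator (fun _ => ENNReal.ofReal (c n)) v)
                (fun _ _ => zero_le) (Finset.mem_univ k))
              rw [Set.indicator_of_mem]
              exact ⟨h1, hk⟩
            · simp only [hf]
              rw [if_neg hv]
              exact zero_le
        _ = ∑ k : Fin (n + 1), ∑' v,
            (walksAt d n k a).indicator (fun _ => ENNReal.ofReal (c n)) v := by
            rw [Summable.tsum_finsetSum]
            intro _ _
            exact ENNReal.summable
        _ ≤ ∑ k : Fin (n + 1), (((2 * d) ^ n : ℕ) * ENNReal.ofReal (c n)) := by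
            apply Finset.sum_le_sum
            intro k _
            rw [← tsum_subtype, ENNReal.tsum_set_const]
            gcongr
            have := walksAt_encard d n k a
            exact_mod_cast ENat.toENNReal_le.2 this
        _ = _ := by simp
    · rw [if_neg hn]
      simp [hf, hn]
  refine (ENNReal.tsum_le_tsum inner).trans ?_
  rw [tsum_eq_zero_add' ENNReal.summable]
  simp only [nonpos_iff_eq_zero, one_ne_zero, if_false, zero_add, le_add_iff_nonneg_left, zero_le,
    if_true]
  have term : ∀ m : ℕ, ((m + 1 + 1 : ℕ) : ℝ≥0∞) * (((2 * d) ^ (m + 1) : ℕ) *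
      ENNReal.ofReal (c (m + 1))) ≤ ENNReal.ofReal ((4 * d * u * (T * y)) * (1 / 2) ^ m) := by
    intro m
    rw [← ENNReal.ofReal_natCast, ← ENNReal.ofReal_natCast, ← ENNReal.ofReal_mul (by positivity),
      ← ENNReal.ofReal_mul (by positivity)]
    apply ENNReal.ofReal_le_ofReal
    simp only [hc]
    have h2 : ((m + 1 + 1 : ℕ) : ℝ) ≤ 2 ^ (m + 1) := by
      exact_mod_cast Nat.lt_two_pow_self (n := m + 1)
    have hxx : 0 < T * y := by positivity
    have e3 : (((2 * d) ^ (m + 1) : ℕ) : ℝ) * (u * (2 * d / (T + 1) ^ 2) *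
        (T / ((T + 1) * (2 * d))) ^ (m + 1) * y ^ (m + 1)) =
        u * (2 * d / (T + 1) ^ 2) * (T * y / (T + 1)) ^ (m + 1) := by
      push_cast
      rw [mul_comm, mul_assoc, mul_assoc, ← mul_pow, ← mul_pow, ← mul_assoc]
      congr 2
      field_simp
    rw [e3]
    have h4 : u * (2 * d / (T + 1) ^ 2) ≤ u * (2 * d) := by
      gcongr
      apply div_le_self (by positivity)
      apply one_le_pow₀
      linarith
    have h5 : T * y / (T + 1) ≤ T * y := div_le_self hxx.le (by linarith)
    calc _ ≤ 2 ^ (m + 1) * (u * (2 * d) * (T * y) ^ (m + 1)) := by gcongr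
      _ = (4 * d * u * (T * y)) * (2 * (T * y)) ^ m := by ring
      _ ≤ _ := by
        gcongr
        linarith
  refine (ENNReal.tsum_le_tsum term).trans ?_
  rw [← ENNReal.ofReal_tsum_of_nonneg (fun n => by positivity)
    (summable_geometric_two.mul_left _), tsum_mul_left, tsum_geometric_two]
  rw [← ENNReal.ofReal_one]
  apply ENNReal.ofReal_le_ofReal
  linarith

lemma poisson_tail {l : ℝ} (hl : 0 ≤ l) :
    ∑' k : ℕ, ENNReal.ofReal (Real.exp (-l) * l ^ (k + 1) / (Nat.factorial (k + 1)))
      ≤ ENNReal.ofReal l := by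
  have hs : HasSum (fun k : ℕ => l * Real.exp (-l) * (l ^ k / Nat.factorial k))
      (l * Real.exp (-l) * Real.exp l) := by
    apply HasSum.mul_left
    rw [Real.exp_eq_exp_ℝ]
    exact NormedSpace.expSeries_div_hasSum_exp l
  have h1 : ∀ k : ℕ, ENNReal.ofReal (Real.exp (-l) * l ^ (k + 1) / (Nat.factorial (k + 1))) ≤
      ENNReal.ofReal (l * Real.exp (-l) * (l ^ k / Nat.factorial k)) := by
    intro k
    apply ENNReal.ofReal_le_ofReal
    have : (l * Real.exp (-l) * (l ^ k / Nat.factorial k)) =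
      Real.exp (-l) * l ^ (k + 1) / Nat.factorial k := by ring
    rw [this]
    gcongr
    omega
  refine (ENNReal.tsum_le_tsum h1).trans ?_
  rw [← ENNReal.ofReal_tsum_of_nonneg (fun n => by positivity) hs.summable, hs.tsum_eq,
    mul_assoc, ← Real.exp_add]
  simp

/-- Probability that all walks of a finite set are present. -/
lemma prob_present_aux (d : ℕ) {u T : ℝ} (hu : 0 < u) (hT : 0 < T) (μ : Measure (W d → ℕ))
    (hμ : IsFRI d u T μ) (S : Finset (W d)) : ∀ (F : Finset (W d)) (g : W d → ℕ), Disjoint S F →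
    μ {ω | (∀ w ∈ S, 1 ≤ ω w) ∧ ∀ w ∈ F, ω w = g w} ≤
      (∏ w ∈ S, ENNReal.ofReal (intensity d u T w)) *
      ∏ w ∈ F, ENNReal.ofReal
        (Real.exp (-intensity d u T w) * (intensity d u T w) ^ g w / (Nat.factorial (g w))) := by
  classical
  induction S using Finset.induction_on with
  | empty =>
    intro F g _
    simp only [Finset.notMem_empty, false_imp_iff, implies_true, true_and, Finset.prod_empty,
      one_mul]
    exact (hμ.2 F g).le
  | insert a S ha ih =>
    intro F g hdis
    rw [Finset.disjoint_insert_left] at hdis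
    have hsub : {ω : W d → ℕ | (∀ w ∈ insert a S, 1 ≤ ω w) ∧ ∀ w ∈ F, ω w = g w} ⊆
        ⋃ k : ℕ, {ω | (∀ w ∈ S, 1 ≤ ω w) ∧
          ∀ w ∈ insert a F, ω w = Function.update g a (k + 1) w} := by
      rintro ω ⟨h1, h2⟩
      rw [Set.mem_iUnion]
      refine ⟨ω a - 1, fun w hw => h1 w (Finset.mem_insert_of_mem hw), ?_⟩
      intro w hw
      have := h1 a (Finset.mem_insert_self a S)
      rcases Finset.mem_insert.1 hw with rfl | hw
      · simp; omega
      · have : w ≠ a := fun h => hdis.1 (h ▸ hw)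
        rw [Function.update_of_ne this]
        exact h2 w hw
    refine (measure_mono hsub).trans ((measure_iUnion_le _).trans ?_)
    have hb : ∀ k : ℕ, μ {ω | (∀ w ∈ S, 1 ≤ ω w) ∧
          ∀ w ∈ insert a F, ω w = Function.update g a (k + 1) w} ≤
        ((∏ w ∈ S, ENNReal.ofReal (intensity d u T w)) * ∏ w ∈ F, ENNReal.ofReal
        (Real.exp (-intensity d u T w) * (intensity d u T w) ^ g w / (Nat.factorial (g w)))) *
        ENNReal.ofReal (Real.exp (-intensity d u T a) * (intensity d u T a) ^ (k + 1) /
          (Nat.factorial (k + 1))) := by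
      intro k
      refine (ih (insert a F) (Function.update g a (k + 1)) ?_).trans (le_of_eq ?_)
      · rw [Finset.disjoint_insert_right]
        exact ⟨ha, hdis.2⟩
      · rw [Finset.prod_insert hdis.1, Function.update_self, mul_assoc]
        congr 1
        rw [mul_comm]
        congr 1
        apply Finset.prod_congr rfl
        intro w hw
        have : w ≠ a := fun h => hdis.1 (h ▸ hw)
        rw [Function.update_of_ne this]
    refine (ENNReal.tsum_le_tsum hb).trans ?_
    rw [ENNReal.tsum_mul_left, Finset.prod_insert ha]
    refine (mul_le_mul_right (poisson_tail (intensity_nonneg d hu hT a)) _).trans (le_of_eq ?_)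
    ring

lemma prob_present (d : ℕ) {u T : ℝ} (hu : 0 < u) (hT : 0 < T) (μ : Measure (W d → ℕ))
    (hμ : IsFRI d u T μ) (S : Finset (W d)) :
    μ {ω | ∀ w ∈ S, 1 ≤ ω w} ≤ ∏ w ∈ S, ENNReal.ofReal (intensity d u T w) := by
  simpa using prob_present_aux d hu hT μ hμ S ∅ 0 (Finset.disjoint_empty_right _)

/-- the event that `p` is open -/
def OpenPath {d n : ℕ} (p : Fin (n + 1) → (Fin d → ℤ)) : Set (W d → ℕ) :=
  {ω | ∀ i : Fin n, OpenEdge ω (p i.castSucc) (p i.succ)}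

/-- `w` crosses some edge of `p`. -/
def Hits {d n : ℕ} (p : Fin (n + 1) → (Fin d → ℤ)) (w : W d) : Prop :=
  ∃ i : Fin n, Crosses w (p i.castSucc) (p i.succ)

lemma cross_card {d n : ℕ} (p : Fin (n + 1) → (Fin d → ℤ)) (hp : IsSAP d n p) (w : W d)
    (A : Finset (Fin n)) (hA : ∀ i ∈ A, Crosses w (p i.castSucc) (p i.succ)) :
    A.card ≤ w.1.1 := by
  classical
  rcases A.eq_empty_or_nonempty with hE | ⟨i₀, hi₀⟩
  · simp [hE]
  have hne : Nonempty (Fin w.1.1) := ⟨(hA i₀ hi₀).choose⟩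
  choose! k hk using hA
  have : A.card ≤ (Finset.univ : Finset (Fin w.1.1)).card := by
    apply Finset.card_le_card_of_injOn k (fun _ _ => by simp)
    intro i hi j hj hij
    by_contra hne
    apply hp.2.2 i j hne
    have h1 := hk i hi
    have h2 := hk j hj
    rw [hij] at h1
    rcases h1 with ⟨a, b⟩ | ⟨a, b⟩ <;> rcases h2 with ⟨c, e⟩ | ⟨c, e⟩
    · left; exact ⟨a.symm.trans c, b.symm.trans e⟩
    · right; exact ⟨a.symm.trans c, b.symm.trans e⟩
    · right; exact ⟨b.symm.trans e, a.symm.trans c⟩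
    · left; exact ⟨b.symm.trans e, a.symm.trans c⟩
  simpa using this

lemma open_cover {d n : ℕ} (p : Fin (n + 1) → (Fin d → ℤ)) (hp : IsSAP d n p) (ω : W d → ℕ)
    (hω : ω ∈ OpenPath p) : ∃ S : Finset (W d), (∀ w ∈ S, Hits p w) ∧ n ≤ ∑ w ∈ S, w.1.1 ∧
      ∀ w ∈ S, 1 ≤ ω w := by
  classical
  choose k hk1 hk2 using hω
  refine ⟨Finset.univ.image k, ?_, ?_, ?_⟩
  · intro w hw
    obtain ⟨i, -, rfl⟩ := Finset.mem_image.1 hw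
    exact ⟨i, hk2 i⟩
  · have h := Finset.card_eq_sum_card_image k (Finset.univ : Finset (Fin n))
    rw [Finset.card_univ, Fintype.card_fin] at h
    conv_lhs => rw [h]
    apply Finset.sum_le_sum
    intro w _
    apply cross_card p hp
    intro i hi
    rw [Finset.mem_filter] at hi
    rw [← hi.2]
    exact hk2 i
  · intro w hw
    obtain ⟨i, -, rfl⟩ := Finset.mem_image.1 hw
    exact hk1 i

instance W_countable (d : ℕ) : Countable (W d) := by
  have : Countable (PrePath d) := by unfold PrePath; infer_instance
  unfold W; infer_instance

lemma weight_hits (d : ℕ) (hd : 3 ≤ d) {u T y : ℝ} (hu : 0 < u) (hT : 0 < T) (hy : 0 < y)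
    (hx : T * y ≤ 1 / 4) (hx2 : 8 * d * u * (T * y) ≤ 1) {n : ℕ}
    (p : Fin (n + 1) → (Fin d → ℤ)) :
    ∑' w : W d, (open Classical in if Hits p w then
      ENNReal.ofReal (intensity d u T w * y ^ w.1.1) else 0) ≤ n := by
  classical
  calc _ ≤ ∑' w : W d, ∑ i : Fin n, (if 1 ≤ w.1.1 ∧ ∃ k, w.1.2 k = p i.castSucc then
      ENNReal.ofReal (intensity d u T w * y ^ w.1.1) else 0) := by
        apply ENNReal.tsum_le_tsum
        intro w
        split_ifs with h
        · obtain ⟨i, k, hk⟩ := h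
          refine le_trans ?_ (Finset.single_le_sum (f := fun i : Fin n =>
            (if 1 ≤ w.1.1 ∧ ∃ k, w.1.2 k = p i.castSucc then
              ENNReal.ofReal (intensity d u T w * y ^ w.1.1) else 0))
            (fun _ _ => zero_le) (Finset.mem_univ i))
          rw [if_pos]
          refine ⟨by have := k.2; omega, ?_⟩
          rcases hk with hk | hk
          · exact ⟨_, hk.1⟩
          · exact ⟨_, hk.2⟩
        · exact zero_le
    _ = ∑ i : Fin n, ∑' w : W d, (if 1 ≤ w.1.1 ∧ ∃ k, w.1.2 k = p i.castSucc then
      ENNReal.ofReal (intensity d u T w * y ^ w.1.1) else 0) := by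
        rw [Summable.tsum_finsetSum]
        intro _ _
        exact ENNReal.summable
    _ ≤ ∑ i : Fin n, 1 := by
        apply Finset.sum_le_sum
        intro i _
        exact weight_visit d hd hu hT hy hx hx2 _
    _ = n := by simp

lemma prob_open (d : ℕ) (hd : 3 ≤ d) {u T y : ℝ} (hu : 0 < u) (hT : 0 < T) (hy : 1 ≤ y)
    (hx : T * y ≤ 1 / 4) (hx2 : 8 * d * u * (T * y) ≤ 1) (μ : Measure (W d → ℕ))
    (hμ : IsFRI d u T μ) {n : ℕ} (p : Fin (n + 1) → (Fin d → ℤ)) (hp : IsSAP d n p) :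
    μ (OpenPath p) ≤ ENNReal.ofReal ((y ^ n)⁻¹ * Real.exp n) := by
  classical
  have hy0 : 0 < y := by linarith
  set gr : W d → ℝ := fun w => if Hits p w then intensity d u T w * y ^ w.1.1 else 0 with hgr
  have hgr0 : ∀ w, 0 ≤ gr w := by
    intro w
    simp only [hgr]
    have := intensity_nonneg d hu hT w
    split_ifs <;> positivity
  have hsum : ∀ F : Finset (W d), ∑ w ∈ F, gr w ≤ n := by
    intro F
    have h1 : ∑ w ∈ F, ENNReal.ofReal (gr w) ≤ n := by
      refine (ENNReal.sum_le_tsum F).trans (le_trans (le_of_eq ?_)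
        (weight_hits d hd hu hT hy0 hx hx2 p))
      apply tsum_congr
      intro w
      simp only [hgr]
      split_ifs <;> simp
    rw [← ENNReal.ofReal_sum_of_nonneg (fun w _ => hgr0 w), ← ENNReal.ofReal_natCast,
      ENNReal.ofReal_le_ofReal_iff (by positivity)] at h1
    exact h1
  set E : Finset (W d) → Set (W d → ℕ) := fun S =>
    {ω | (∀ w ∈ S, Hits p w) ∧ n ≤ ∑ w ∈ S, w.1.1 ∧ ∀ w ∈ S, 1 ≤ ω w} with hE
  have hsub : OpenPath p ⊆ ⋃ S, E S := by
    intro ω hω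
    rw [Set.mem_iUnion]
    exact open_cover p hp ω hω
  have hES : ∀ S, μ (E S) ≤ ENNReal.ofReal ((y ^ n)⁻¹ * ∏ w ∈ S, gr w) := by
    intro S
    by_cases hS : (∀ w ∈ S, Hits p w) ∧ n ≤ ∑ w ∈ S, w.1.1
    · refine (measure_mono (t := {ω | ∀ w ∈ S, 1 ≤ ω w}) (fun ω h => h.2.2)).trans ?_
      refine (prob_present d hu hT μ hμ S).trans ?_
      rw [← ENNReal.ofReal_prod_of_nonneg (fun w _ => intensity_nonneg d hu hT w)]
      apply ENNReal.ofReal_le_ofReal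
      have e : ∏ w ∈ S, gr w = (∏ w ∈ S, intensity d u T w) * y ^ (∑ w ∈ S, w.1.1) := by
        rw [← Finset.prod_pow_eq_pow_sum, ← Finset.prod_mul_distrib]
        apply Finset.prod_congr rfl
        intro w hw
        simp only [hgr]
        rw [if_pos (hS.1 w hw)]
      rw [e]
      have h0 : 0 ≤ ∏ w ∈ S, intensity d u T w :=
        Finset.prod_nonneg fun w _ => intensity_nonneg d hu hT w
      have h1 : y ^ n ≤ y ^ (∑ w ∈ S, w.1.1) := pow_le_pow_right₀ hy hS.2
      have hyn : 0 < y ^ n := by positivity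
      calc _ = (y ^ n)⁻¹ * ((∏ w ∈ S, intensity d u T w) * y ^ n) := by field_simp
        _ ≤ _ := by gcongr
    · have : E S = ∅ := by
        ext ω
        simp only [hE, Set.mem_ofPred_eq, Set.mem_empty_iff_false, iff_false]
        exact fun h => hS ⟨h.1, h.2.1⟩
      rw [this]
      simp
  refine (measure_mono hsub).trans ((measure_iUnion_le _).trans ?_)
  refine (ENNReal.tsum_le_tsum hES).trans ?_
  refine ENNReal.summable.tsum_le_of_sum_le fun 𝓕 => ?_
  refine (Finset.sum_le_sum_of_subset (t := (𝓕.sup id).powerset) ?_).trans ?_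
  · intro S hS
    rw [Finset.mem_powerset]
    exact Finset.le_sup (f := id) hS
  rw [← ENNReal.ofReal_sum_of_nonneg
    (fun S _ => mul_nonneg (by positivity) (Finset.prod_nonneg fun w _ => hgr0 w))]
  apply ENNReal.ofReal_le_ofReal
  rw [← Finset.mul_sum, ← Finset.prod_one_add]
  gcongr
  calc ∏ w ∈ 𝓕.sup id, (1 + gr w) ≤ ∏ w ∈ 𝓕.sup id, Real.exp (gr w) := by
        apply Finset.prod_le_prod
        · intro w _; have := hgr0 w; positivity
        · intro w _; rw [add_comm]; exact Real.add_one_le_exp _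
    _ = Real.exp (∑ w ∈ 𝓕.sup id, gr w) := (Real.exp_sum _ _).symm
    _ ≤ _ := Real.exp_le_exp.2 (hsum _)

lemma SAP_sub (d n : ℕ) : {p | IsSAP d n p} ⊆ walksAt d n 0 0 := fun _ h => ⟨h.2.1, h.1⟩

lemma SAP_finite (d n : ℕ) : {p | IsSAP d n p}.Finite := by
  refine Set.Finite.subset ?_ (SAP_sub d n)
  rw [← Set.encard_lt_top_iff]
  exact (walksAt_encard d n 0 0).trans_lt (ENat.natCast_lt_top _)

lemma SAP_card (d n : ℕ) : (SAP_finite d n).toFinset.card ≤ (2 * d) ^ n := by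
  have h := (Set.encard_le_encard (SAP_sub d n)).trans (walksAt_encard d n 0 0)
  rw [(SAP_finite d n).encard_eq_coe_toFinset_card] at h
  exact_mod_cast h

lemma OpenPath_meas {d n : ℕ} (p : Fin (n + 1) → (Fin d → ℤ)) : MeasurableSet (OpenPath p) := by
  have : OpenPath p = ⋂ i : Fin n, ⋃ w : W d,
      ({ω | 1 ≤ ω w} ∩ {_ω | Crosses w (p i.castSucc) (p i.succ)}) := by
    ext ω
    simp only [OpenPath, OpenEdge, Set.mem_ofPred_eq, Set.mem_iInter, Set.mem_iUnion, Set.mem_inter_iff]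
  rw [this]
  refine MeasurableSet.iInter fun i => MeasurableSet.iUnion fun w => ?_
  refine MeasurableSet.inter ?_ (MeasurableSet.const _)
  exact measurableSet_le measurable_const (measurable_pi_apply w)

lemma count_eq {d n : ℕ} (ω : W d → ℕ) : (openSAPcount d n ω : ℝ≥0∞) =
    ∑ p ∈ (SAP_finite d n).toFinset, (OpenPath p).indicator (fun _ => (1 : ℝ≥0∞)) ω := by
  classical
  have : {p : Fin (n + 1) → (Fin d → ℤ) | IsSAP d n p ∧
    ∀ i : Fin n, OpenEdge ω (p i.castSucc) (p i.succ)} =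
      (((SAP_finite d n).toFinset.filter (fun p => ω ∈ OpenPath p) : Finset _) : Set _) := by
    ext p
    rw [Finset.mem_coe, Finset.mem_filter, Set.Finite.mem_toFinset]
    rfl
  unfold openSAPcount
  rw [this, Set.ncard_coe_finset, Finset.card_filter]
  push_cast
  apply Finset.sum_congr rfl
  intro p _
  simp [Set.indicator_apply]

lemma OpenEdge.nn {d : ℕ} {ω : W d → ℕ} {a b : Fin d → ℤ} (h : OpenEdge ω a b) :
    ∑ j, |b j - a j| = 1 := by
  obtain ⟨w, -, i, ⟨rfl, rfl⟩ | ⟨rfl, rfl⟩⟩ := h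
  · exact w.2 i
  · rw [← w.2 i]
    exact Finset.sum_congr rfl fun j _ => abs_sub_comm _ _

lemma OpenEdge.symm' {d : ℕ} {ω : W d → ℕ} {a b : Fin d → ℤ} (h : OpenEdge ω a b) :
    OpenEdge ω b a := by
  obtain ⟨w, h1, i, h⟩ := h
  exact ⟨w, h1, i, h.symm⟩

/-- the open graph -/
def openGraph {d : ℕ} (ω : W d → ℕ) : SimpleGraph (Fin d → ℤ) where
  Adj := OpenEdge ω
  symm := ⟨fun _ _ h => h.symm'⟩
  loopless := ⟨fun a h => by have := h.nn; simp at this⟩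

lemma walk_len {d : ℕ} {ω : W d → ℕ} {a b : Fin d → ℤ} (p : (openGraph ω).Walk a b) :
    ∑ j, |b j - a j| ≤ p.length := by
  induction p with
  | nil => simp
  | @cons a c b h q ih =>
    have h1 : ∑ j, |c j - a j| = 1 := OpenEdge.nn h
    have : ∑ j, |b j - a j| ≤ ∑ j, (|b j - c j| + |c j - a j|) :=
      Finset.sum_le_sum fun j _ => abs_sub_le _ _ _
    rw [Finset.sum_add_distrib] at this
    rw [SimpleGraph.Walk.length_cons]
    push_cast
    linarith

lemma infinite_sub (d n : ℕ) : {ω : W d → ℕ | (Cluster ω).Infinite} ⊆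
    ⋃ p ∈ (SAP_finite d n).toFinset, OpenPath p := by
  classical
  intro ω hω
  have hfin : {v : Fin d → ℤ | ∑ j, |v j| < n}.Finite := by
    refine (Set.finite_Icc (fun _ => -(n:ℤ)) (fun _ => (n:ℤ))).subset ?_
    intro v hv
    have : ∀ j, |v j| ≤ n := fun j =>
      (Finset.single_le_sum (f := fun j => |v j|) (fun _ _ => abs_nonneg _)
        (Finset.mem_univ j)).trans (le_of_lt hv)
    exact ⟨fun j => (abs_le.1 (this j)).1, fun j => (abs_le.1 (this j)).2⟩
  obtain ⟨v, hv, hvn⟩ := Set.Infinite.exists_notMem_finite hω hfin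
  have hreach : (openGraph ω).Reachable 0 v := by
    rw [SimpleGraph.reachable_iff_reflTransGen]
    exact hv
  obtain ⟨q, hq⟩ := hreach.exists_isPath
  have hlen : n ≤ q.length := by
    have := walk_len q
    simp only [Set.mem_ofPred_eq, not_lt] at hvn
    simp only [Pi.zero_apply, sub_zero] at this
    exact_mod_cast hvn.trans this
  have hadj : ∀ i : Fin n, OpenEdge ω (q.getVert i) (q.getVert (i + 1)) := fun i =>
    q.adj_getVert_succ (by have := i.2; omega)
  have hinj : ∀ i j : ℕ, i ≤ n → j ≤ n → q.getVert i = q.getVert j → i = j := fun i j hi hj h =>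
    hq.getVert_injOn (by simp; omega) (by simp; omega) h
  simp only [Set.mem_iUnion, Set.Finite.mem_toFinset, Set.mem_ofPred_eq]
  refine ⟨fun i => q.getVert i, ⟨by simp, ?_, ?_⟩, ?_⟩
  · intro i
    simpa using (hadj i).nn
  · intro i j hij h
    have := i.2
    have := j.2
    simp only [Fin.val_castSucc, Fin.val_succ] at h
    rcases h with ⟨h, -⟩ | ⟨h, h'⟩
    · exact hij (Fin.ext (hinj _ _ (by omega) (by omega) h))
    · have a := hinj _ _ (by omega) (by omega) h
      have b := hinj _ _ (by omega) (by omega) h'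
      omega
  · intro i
    simpa using hadj i

/-- Subcritical phase: for `d ≥ 3` and `u > 0` there is `T₀ ∈ (0,1)` such that for every
`0 < T < T₀` and every FRI law `μ = FI^{u,T}`, the expected number of open self-avoiding
paths of length `n` from the origin is at most `(2d)^n (2(3d)^{-n} + (3d)^{-n-1})`, a bound
tending to `0`; consequently the origin is a.s. not in an infinite cluster. -/
theorem fri_subcritical (d : ℕ) (hd : 3 ≤ d) (u : ℝ) (hu : 0 < u) :
    ∃ T₀ : ℝ, 0 < T₀ ∧ T₀ < 1 ∧
      Tendsto (fun n : ℕ =>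
        ((2 * d : ℝ) ^ n * (2 * (3 * d : ℝ) ^ (-(n : ℤ)) + (3 * d : ℝ) ^ (-(n : ℤ) - 1))))
        atTop (nhds 0) ∧
      ∀ T : ℝ, 0 < T → T < T₀ → ∀ μ : Measure (W d → ℕ), IsFRI d u T μ →
        (∀ n : ℕ, (∫⁻ ω, (openSAPcount d n ω : ℝ≥0∞) ∂μ) ≤
          ENNReal.ofReal
            ((2 * d : ℝ) ^ n * (2 * (3 * d : ℝ) ^ (-(n : ℤ)) + (3 * d : ℝ) ^ (-(n : ℤ) - 1)))) ∧
        μ {ω | (Cluster ω).Infinite} = 0 := by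
  have hd0 : (0:ℝ) < d := by exact_mod_cast (by omega : 0 < d)
  have hd3 : (3:ℝ) ≤ d := by exact_mod_cast hd
  have he : (1:ℝ) ≤ Real.exp 1 := Real.one_le_exp (by norm_num)
  set y : ℝ := 3 * d * Real.exp 1 with hy
  have hy1 : 1 ≤ y := by nlinarith
  have hy0 : 0 < y := by linarith
  have hlim : Tendsto (fun n : ℕ =>
        ((2 * d : ℝ) ^ n * (2 * (3 * d : ℝ) ^ (-(n : ℤ)) + (3 * d : ℝ) ^ (-(n : ℤ) - 1))))
        atTop (nhds 0) := by
    have e : ∀ n : ℕ, ((2 * d : ℝ) ^ n * (2 * (3 * d : ℝ) ^ (-(n : ℤ)) +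
        (3 * d : ℝ) ^ (-(n : ℤ) - 1))) = (2 + (3 * d : ℝ)⁻¹) * (2 / 3 : ℝ) ^ n := by
      intro n
      rw [zpow_sub_one₀ (by positivity), zpow_neg, zpow_natCast]
      have : (2 / 3 : ℝ) = (2 * d : ℝ) * (3 * d : ℝ)⁻¹ := by field_simp
      rw [this, mul_pow (2 * d : ℝ), inv_pow]
      ring
    simp_rw [e]
    have := (tendsto_pow_atTop_nhds_zero_of_lt_one (r := (2/3:ℝ)) (by norm_num)
      (by norm_num)).const_mul (2 + (3 * d : ℝ)⁻¹)
    simpa using this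
  refine ⟨min (1 / 4) (1 / (8 * d * u)) / y, by positivity, ?_, hlim, ?_⟩
  · rw [div_lt_one hy0]
    exact (min_le_left _ _).trans_lt (by linarith)
  intro T hT hT0 μ hμ
  rw [lt_div_iff₀ hy0] at hT0
  have hx : T * y ≤ 1 / 4 := hT0.le.trans (min_le_left _ _)
  have hx2 : 8 * d * u * (T * y) ≤ 1 := by
    have := hT0.le.trans (min_le_right _ _)
    rw [le_div_iff₀ (by positivity)] at this
    linarith
  have key : ∀ n : ℕ, ∑ p ∈ (SAP_finite d n).toFinset, μ (OpenPath p) ≤ ENNReal.ofReal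
            ((2 * d : ℝ) ^ n * (2 * (3 * d : ℝ) ^ (-(n : ℤ)) + (3 * d : ℝ) ^ (-(n : ℤ) - 1))) := by
    intro n
    have h1 : ∀ p ∈ (SAP_finite d n).toFinset, μ (OpenPath p) ≤
        ENNReal.ofReal ((y ^ n)⁻¹ * Real.exp n) := by
      intro p hp
      exact prob_open d hd hu hT hy1 hx hx2 μ hμ p (by simpa using hp)
    refine (Finset.sum_le_card_nsmul _ _ _ h1).trans ?_
    rw [nsmul_eq_mul, ← ENNReal.ofReal_natCast, ← ENNReal.ofReal_mul (by positivity)]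
    apply ENNReal.ofReal_le_ofReal
    have hc : ((SAP_finite d n).toFinset.card : ℝ) ≤ (2 * d : ℝ) ^ n := by
      exact_mod_cast SAP_card d n
    have h2 : (y ^ n)⁻¹ * Real.exp n = (3 * d : ℝ) ^ (-(n : ℤ)) := by
      rw [hy, mul_pow, ← Real.exp_nat_mul, mul_one, zpow_neg, zpow_natCast]
      field_simp
    rw [h2]
    have h3 : 0 < (3 * d : ℝ) ^ (-(n : ℤ)) := by positivity
    have h4 : 0 < (3 * d : ℝ) ^ (-(n : ℤ) - 1) := by positivity
    gcongr
    linarith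
  refine ⟨fun n => ?_, ?_⟩
  · refine le_trans (le_of_eq ?_) (key n)
    simp_rw [count_eq]
    rw [lintegral_finsetSum _ (fun p _ => measurable_const.indicator (OpenPath_meas p))]
    apply Finset.sum_congr rfl
    intro p _
    rw [lintegral_indicator (OpenPath_meas p)]
    simp
  · have hle : ∀ n : ℕ, μ {ω | (Cluster ω).Infinite} ≤ ENNReal.ofReal
            ((2 * d : ℝ) ^ n * (2 * (3 * d : ℝ) ^ (-(n : ℤ)) + (3 * d : ℝ) ^ (-(n : ℤ) - 1))) :=
      fun n => (measure_mono (infinite_sub d n)).trans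
        ((measure_biUnion_finset_le _ _).trans (key n))
    have ht := ENNReal.tendsto_ofReal hlim
    rw [ENNReal.ofReal_zero] at ht
    exact le_antisymm (ge_of_tendsto' ht hle) zero_le

end
end

section
/- Let d ≥ 3, u > 0, R ≥ 1. Consider FI^{u,R³} constructed by attaching Poisson(2du/(R³+1)) many killed walks to each vertex. Let A(m,R) = B((128+64m)R²) \ B((128+64(m−1))R²) for m ≥ 1 (with A(1,R) = B(192R²)\B(128R²)). Then the probability that some killed random walk starting in ℤ^d \ B(128R²) ever reaches B̂(R) := [−64R², 64R²]^d is at most Σ_{m=1}^∞ (c₄ m^d R^{2d} c₁ e^{−c₂ m R} + c₄ m^d R^{2d} (2dumR⁴/(R³+1)) e^{−c₃ m R^{1/2}}) for suitable positive constants c₁,...,c₄ depending on u and d, and this bound tends to 0 as R → ∞. -/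
open MeasureTheory Real Filter ENNReal

noncomputable section

/-- The box `B(r) = [-r, r]^d ∩ ℤ^d`. -/
def box (d : ℕ) (r : ℝ) : Set (Fin d → ℤ) := {x | ∀ j, |(x j : ℝ)| ≤ r}

/-- The event that some killed random walk of the configuration starting outside `B(128R²)`
reaches `B̂(R) = [-64R², 64R²]^d`. -/
def BadEvent (d R : ℕ) (ω : W d → ℕ) : Prop :=
  ∃ w : W d, 1 ≤ ω w ∧ w.1.2 0 ∉ box d (128 * R ^ 2) ∧ ∃ i, w.1.2 i ∈ box d (64 * R ^ 2)

/-- The unit step of `ℤ^d` with given direction and sign. -/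
def stepVec {d : ℕ} (s : Fin d × Bool) : Fin d → ℤ :=
  fun k => if k = s.1 then (if s.2 then 1 else -1) else 0

/-- The path with given start and steps. -/
def pth {d n : ℕ} (x : Fin d → ℤ) (s : Fin n → Fin d × Bool) : Fin (n + 1) → Fin d → ℤ :=
  fun i j => x j + ∑ k : Fin n, if k.val < i.val then stepVec (s k) j else 0

lemma exists_stepVec {d : ℕ} (v : Fin d → ℤ) (hv : ∑ j, |v j| = 1) : ∃ s, stepVec s = v := by
  have h1 : ∃ j, v j ≠ 0 := by
    by_contra! h
    simp [h] at hv
  obtain ⟨j, hj⟩ := h1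
  have h2 : |v j| + ∑ k ∈ Finset.univ.erase j, |v k| = 1 := by
    rw [← hv]; exact Finset.add_sum_erase _ (fun k => |v k|) (Finset.mem_univ j)
  have h3 : 0 ≤ ∑ k ∈ Finset.univ.erase j, |v k| := Finset.sum_nonneg fun _ _ => abs_nonneg _
  have h4 : 1 ≤ |v j| := Int.one_le_abs hj
  have h5 : ∑ k ∈ Finset.univ.erase j, |v k| = 0 := by linarith
  have h6 : |v j| = 1 := by linarith
  have h5 := (Finset.sum_eq_zero_iff_of_nonneg (fun (k : Fin d) _ => abs_nonneg (v k))).1 h5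
  refine ⟨(j, decide (v j = 1)), ?_⟩
  funext k
  unfold stepVec
  by_cases hk : k = j
  · subst hk
    rcases (abs_eq (by norm_num : (0:ℤ) ≤ 1)).1 h6 with h | h <;> simp [h]
  · have := h5 k (by simp [hk])
    simp [hk, abs_eq_zero.1 this]

lemma exists_pth {d : ℕ} (w : W d) : ∃ s : Fin w.1.1 → Fin d × Bool, w.1.2 = pth (w.1.2 0) s := by
  obtain ⟨⟨n, p⟩, hw⟩ := w
  have h : ∀ i : Fin n, ∃ s, stepVec s = fun j => p i.succ j - p i.castSucc j :=
    fun i => exists_stepVec _ (hw i)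
  choose s hs using h
  refine ⟨s, ?_⟩
  funext i
  show p i = pth (p 0) s i
  induction i using Fin.induction with
  | zero => funext j; simp [pth]
  | succ i ih =>
    funext j
    have h1 := congrFun (hs i) j
    have h2 := congrFun ih j
    have h3 : p i.succ j = p i.castSucc j + stepVec (s i) j := by rw [h1]; ring
    rw [h3, h2]
    unfold pth
    rw [add_assoc]
    congr 1
    have : ∀ k : Fin n, (if k.val < i.succ.val then stepVec (s k) j else 0) =
        (if k.val < i.castSucc.val then stepVec (s k) j else 0) +
          (if k = i then stepVec (s k) j else 0) := by
      intro k
      have hk : k = i ↔ k.val = i.val := Fin.ext_iff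
      simp only [Fin.val_succ, Fin.val_castSucc, hk]
      split_ifs <;> omega
    rw [Finset.sum_congr rfl fun k _ => this k, Finset.sum_add_distrib]
    simp

lemma meas_one_le {d : ℕ} {u T : ℝ} {μ : Measure (W d → ℕ)} (h : IsFRI d u T μ) (w : W d) :
    μ {ω | 1 ≤ ω w} ≤ ENNReal.ofReal (intensity d u T w) := by
  obtain ⟨hp, h⟩ := h
  have h0 := h {w} 0
  simp at h0
  have hm : MeasurableSet {ω : W d → ℕ | ω w = 0} :=
    measurable_pi_apply w (measurableSet_singleton 0)
  have he : {ω : W d → ℕ | 1 ≤ ω w} = {ω : W d → ℕ | ω w = 0}ᶜ := by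
    ext ω; simp [Nat.one_le_iff_ne_zero]
  rw [he, prob_compl_eq_one_sub hm, h0, ← ENNReal.ofReal_one, ← ENNReal.ofReal_sub _ (exp_pos _).le]
  apply ENNReal.ofReal_le_ofReal
  linarith [Real.add_one_le_exp (-intensity d u T w)]

lemma step_mgf {d : ℕ} (j : Fin d) (t : ℝ) :
    ∑ e : Fin d × Bool, Real.exp (t * (stepVec e j : ℤ)) = 2 * d + 2 * (Real.cosh t - 1) := by
  rw [Fintype.sum_prod_type]
  have : ∀ k : Fin d, ∑ b : Bool, Real.exp (t * (stepVec (k, b) j : ℤ)) =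
      2 + if j = k then 2 * (Real.cosh t - 1) else 0 := by
    intro k
    by_cases hk : j = k
    · simp [stepVec, hk, Real.cosh_eq]; ring
    · simp [stepVec, hk]
  rw [Finset.sum_congr rfl fun k _ => this k, Finset.sum_add_distrib]
  simp; ring

lemma count_bound {d n : ℕ} (x : Fin d → ℤ) (j : Fin d) (i : Fin (n + 1)) (b θ : ℝ) (hθ : 0 ≤ θ) :
    ∑ s : Fin n → Fin d × Bool, (if |(pth x s i j : ℝ)| ≤ b then (1:ℝ) else 0) ≤
      (2 * d + 2 * (Real.cosh θ - 1)) ^ n * Real.exp (-θ * (|(x j : ℝ)| - b)) := by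
  obtain ⟨σ, hσ, hx⟩ : ∃ σ : ℝ, (σ = 1 ∨ σ = -1) ∧ |(x j : ℝ)| = σ * x j := by
    rcases abs_choice (x j : ℝ) with h | h
    · exact ⟨1, Or.inl rfl, by rw [h]; ring⟩
    · exact ⟨-1, Or.inr rfl, by rw [h]; ring⟩
  have hcosh : Real.cosh (-(θ * σ)) = Real.cosh θ := by
    rcases hσ with h | h <;> simp [h]
  calc _ ≤ ∑ s : Fin n → Fin d × Bool,
        (∏ k : Fin n, Real.exp (if k.val < i.val then -(θ * σ) * (stepVec (s k) j : ℤ) else 0)) *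
          Real.exp (-θ * (|(x j : ℝ)| - b)) := by
        apply Finset.sum_le_sum
        intro s _
        split_ifs with h
        · rw [← Real.exp_sum, ← Real.exp_add]
          apply Real.one_le_exp
          have h1 : ∑ k : Fin n, (if k.val < i.val then -(θ * σ) * ((stepVec (s k) j : ℤ) : ℝ) else 0)
              = -(θ * σ) * (pth x s i j - x j) := by
            simp only [pth]
            push_cast
            rw [add_sub_cancel_left, Finset.mul_sum]
            apply Finset.sum_congr rfl
            intro k _
            split_ifs <;> simp
          rw [h1, hx]
          have h2 : σ * (pth x s i j : ℝ) ≤ b := by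
            rcases hσ with h' | h' <;> rw [h'] <;> have := abs_le.1 h <;> linarith
          nlinarith
        · positivity
    _ = (∏ k : Fin n, ∑ e : Fin d × Bool,
          Real.exp (if k.val < i.val then -(θ * σ) * (stepVec e j : ℤ) else 0)) *
          Real.exp (-θ * (|(x j : ℝ)| - b)) := by
        rw [← Finset.sum_mul, Finset.prod_univ_sum, Fintype.piFinset_univ]
    _ ≤ _ := by
        gcongr
        have : (2 * d + 2 * (Real.cosh θ - 1)) ^ n =
          ∏ k : Fin n, (2 * d + 2 * (Real.cosh θ - 1)) := by simp
        rw [this]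
        apply Finset.prod_le_prod
        · intros; positivity
        · intro k _
          by_cases hk : k.val < i.val
          · simp only [hk, if_true]
            rw [step_mgf, hcosh]
          · simp only [hk, if_false]
            simp
            linarith [Real.one_le_cosh θ]

lemma tsum_pi (f : ℤ → ℝ≥0∞) (d : ℕ) :
    ∑' x : Fin d → ℤ, ∏ j, f (x j) = (∑' z, f z) ^ d := by
  induction d with
  | zero => simp
  | succ d ih =>
    rw [← (Fin.consEquiv (fun _ : Fin (d+1) => ℤ)).tsum_eq, ENNReal.tsum_prod']
    simp only [Fin.consEquiv, Equiv.coe_fn_mk, Fin.prod_univ_succ, Fin.cons_zero, Fin.cons_succ]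
    simp_rw [ENNReal.tsum_mul_left, ih, ENNReal.tsum_mul_right]
    rw [pow_succ']

lemma tsum_int_exp (a : ℝ) (ha : 0 < a) (ha1 : a ≤ 1) :
    ∑' z : ℤ, ENNReal.ofReal (Real.exp (-a * |(z : ℝ)|)) ≤ ENNReal.ofReal (4 / a) := by
  have hr : Real.exp (-a) < 1 := by rw [Real.exp_lt_one_iff]; linarith
  have hgeo : ∑' n : ℕ, ENNReal.ofReal (Real.exp (-a * n)) ≤ ENNReal.ofReal (2 / a) := by
    have : ∀ n : ℕ, Real.exp (-a * n) = Real.exp (-a) ^ n := by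
      intro n; rw [← Real.exp_nat_mul]; ring_nf
    simp_rw [this]
    rw [← ENNReal.ofReal_tsum_of_nonneg (fun n => by positivity)
      (summable_geometric_of_lt_one (exp_pos _).le hr),
      tsum_geometric_of_lt_one (exp_pos _).le hr]
    apply ENNReal.ofReal_le_ofReal
    have h1 : a / 2 ≤ 1 - Real.exp (-a) := by
      have h2 := Real.add_one_le_exp a
      have h3 : Real.exp (-a) * Real.exp a = 1 := by rw [← Real.exp_add]; simp
      have h4 := exp_pos (-a)
      nlinarith
    calc (1 - Real.exp (-a))⁻¹ ≤ (a / 2)⁻¹ := inv_anti₀ (by positivity) h1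
      _ = _ := by field_simp
  calc _ ≤ ∑' p : ℕ ⊕ ℕ, ENNReal.ofReal (Real.exp (-a * (Sum.elim (fun n : ℕ => (n:ℝ)) (fun n : ℕ => (n:ℝ)) p))) := by
        let f : ℤ → ℕ ⊕ ℕ := fun z => if 0 ≤ z then Sum.inl z.natAbs else Sum.inr z.natAbs
        have hf : Function.Injective f := by
          intro x y h
          simp only [f] at h
          split_ifs at h <;> simp at h <;> omega
        refine le_trans (le_of_eq ?_) (ENNReal.tsum_comp_le_tsum_of_injective hf _)
        congr 1
        funext z
        simp only [f]
        split_ifs <;> simp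
    _ ≤ _ := by
        rw [Summable.tsum_sum ENNReal.summable ENNReal.summable]
        simp only [Sum.elim_inl, Sum.elim_inr]
        refine (add_le_add hgeo hgeo).trans (le_of_eq ?_)
        rw [← ENNReal.ofReal_add (by positivity) (by positivity)]
        congr 1; ring

lemma event_bound {d R n : ℕ} {u : ℝ} (hu : 0 < u) {μ : Measure (W d → ℕ)}
    (h : IsFRI d u (R ^ 3 : ℕ) μ) (x : Fin d → ℤ) (s : Fin n → Fin d × Bool) (P : Prop)
    [Decidable P] :
    μ {ω | P ∧ ∃ w : W d, w.1 = ⟨n, pth x s⟩ ∧ 1 ≤ ω w} ≤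
      ENNReal.ofReal (u * (2 * d / ((R:ℝ) ^ 3 + 1) ^ 2) *
        ((R:ℝ) ^ 3 / (((R:ℝ) ^ 3 + 1) * (2 * d))) ^ n * if P then 1 else 0) := by
  by_cases hP : P
  · by_cases hw : IsNN (⟨n, pth x s⟩ : PrePath d)
    · have := meas_one_le h ⟨⟨n, pth x s⟩, hw⟩
      refine le_trans (measure_mono ?_) (this.trans (le_of_eq ?_))
      · rintro ω ⟨_, w, hw', h1⟩
        have : w = ⟨⟨n, pth x s⟩, hw⟩ := Subtype.ext hw'
        rw [this] at h1
        exact h1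
      · simp [hP, intensity]
    · have : {ω : W d → ℕ | P ∧ ∃ w : W d, w.1 = ⟨n, pth x s⟩ ∧ 1 ≤ ω w} = ∅ := by
        ext ω
        simp only [Set.mem_ofPred_eq, Set.mem_empty_iff_false, iff_false]
        rintro ⟨_, w, hw', _⟩
        exact hw (hw' ▸ w.2)
      rw [this]; simp
  · simp [hP]

lemma bad_subset (d R : ℕ) : {ω : W d → ℕ | BadEvent d R ω} ⊆
    ⋃ x : Fin d → ℤ, ⋃ n : ℕ, ⋃ s : Fin n → Fin d × Bool,
      {ω | (x ∉ box d (128 * R ^ 2) ∧ ∃ i, pth x s i ∈ box d (64 * R ^ 2)) ∧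
        ∃ w : W d, w.1 = ⟨n, pth x s⟩ ∧ 1 ≤ ω w} := by
  rintro ω ⟨w, h1, h2, i, hi⟩
  obtain ⟨s, hs⟩ := exists_pth w
  simp only [Set.mem_iUnion]
  refine ⟨w.1.2 0, w.1.1, s, ⟨h2, i, ?_⟩, w, ?_, h1⟩
  · rw [← hs]; exact hi
  · rw [← hs]

open Classical in
lemma fixed_n {d R n : ℕ} {u θ : ℝ} (hu : 0 < u) (hθ : 0 ≤ θ) {μ : Measure (W d → ℕ)}
    (h : IsFRI d u (R ^ 3 : ℕ) μ) (x : Fin d → ℤ) (j : Fin d) :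
    ∑' s : Fin n → Fin d × Bool,
      μ {ω | (x ∉ box d (128 * R ^ 2) ∧ ∃ i, pth x s i ∈ box d (64 * R ^ 2)) ∧
        ∃ w : W d, w.1 = ⟨n, pth x s⟩ ∧ 1 ≤ ω w} ≤
    ENNReal.ofReal (u * (2 * d / ((R:ℝ) ^ 3 + 1) ^ 2) *
        (((n:ℝ) + 1) * (((R:ℝ) ^ 3 / (((R:ℝ) ^ 3 + 1) * (2 * d))) *
          (2 * d + 2 * (Real.cosh θ - 1))) ^ n) * Real.exp (-θ * (|(x j : ℝ)| - 64 * R ^ 2))) := by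
  rw [tsum_fintype]
  refine (Finset.sum_le_sum fun s _ => event_bound hu h x s _).trans ?_
  rw [← ENNReal.ofReal_sum_of_nonneg (fun s _ => by split_ifs <;> positivity)]
  apply ENNReal.ofReal_le_ofReal
  rw [← Finset.mul_sum]
  have key : ∑ s : Fin n → Fin d × Bool,
      (if (x ∉ box d (128 * R ^ 2) ∧ ∃ i, pth x s i ∈ box d (64 * R ^ 2)) then (1:ℝ) else 0) ≤
      ((n:ℝ) + 1) * ((2 * d + 2 * (Real.cosh θ - 1)) ^ n *
        Real.exp (-θ * (|(x j : ℝ)| - 64 * R ^ 2))) := by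
    calc _ ≤ ∑ s : Fin n → Fin d × Bool, ∑ i : Fin (n + 1),
          (if |(pth x s i j : ℝ)| ≤ 64 * R ^ 2 then (1:ℝ) else 0) := by
          apply Finset.sum_le_sum
          intro s _
          split_ifs with hs
          · obtain ⟨_, i, hi⟩ := hs
            have h1 : (if |(pth x s i j : ℝ)| ≤ 64 * R ^ 2 then (1:ℝ) else 0) = 1 :=
              if_pos (hi j)
            refine h1.symm.le.trans ?_
            exact Finset.single_le_sum
              (f := fun i => (if |(pth x s i j : ℝ)| ≤ 64 * R ^ 2 then (1:ℝ) else 0))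
              (fun i _ => by split_ifs <;> norm_num) (Finset.mem_univ i)
          · exact Finset.sum_nonneg fun i _ => by split_ifs <;> norm_num
      _ = ∑ i : Fin (n + 1), ∑ s : Fin n → Fin d × Bool,
          (if |(pth x s i j : ℝ)| ≤ 64 * R ^ 2 then (1:ℝ) else 0) := Finset.sum_comm
      _ ≤ ∑ i : Fin (n + 1), ((2 * d + 2 * (Real.cosh θ - 1)) ^ n *
        Real.exp (-θ * (|(x j : ℝ)| - 64 * R ^ 2))) :=
          Finset.sum_le_sum fun i _ => count_bound x j i _ θ hθ
      _ = _ := by simp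
  refine (mul_le_mul_of_nonneg_left key (by positivity)).trans (le_of_eq ?_)
  rw [mul_pow]; ring

lemma q_bound {d R : ℕ} (hd : 3 ≤ d) (hR : 1 ≤ R) {θ : ℝ} (hθ : θ = 1 / (R * Real.sqrt R)) :
    ((R:ℝ) ^ 3 / (((R:ℝ) ^ 3 + 1) * (2 * d))) * (2 * d + 2 * (Real.cosh θ - 1)) ≤
      1 - 1 / (2 * ((R:ℝ) ^ 3 + 1)) := by
  have hR' : (1:ℝ) ≤ R := by exact_mod_cast hR
  have hd' : (3:ℝ) ≤ d := by exact_mod_cast hd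
  have hs : Real.sqrt R ^ 2 = R := Real.sq_sqrt (by positivity)
  have h3 : (1:ℝ) ≤ (R:ℝ) ^ 3 := one_le_pow₀ hR'
  have hθ2 : θ ^ 2 = 1 / (R:ℝ) ^ 3 := by
    rw [hθ, div_pow, mul_pow, hs]; ring
  have hθ1 : θ ^ 2 ≤ 1 := by rw [hθ2]; exact (div_le_one (by positivity)).2 h3
  have hT : (R:ℝ) ^ 3 * θ ^ 2 = 1 := by rw [hθ2]; field_simp
  have hc : Real.cosh θ - 1 ≤ θ ^ 2 := by
    have h1 := Real.cosh_le_exp_half_sq θ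
    have h2 : Real.exp (-(θ ^ 2 / 2)) * Real.exp (θ ^ 2 / 2) = 1 := by rw [← Real.exp_add]; simp
    have h4 := Real.add_one_le_exp (-(θ ^ 2 / 2))
    have h5 := exp_pos (θ ^ 2 / 2)
    have h6 : (1 - θ ^ 2 / 2) * Real.exp (θ ^ 2 / 2) ≤ 1 := by nlinarith
    have h7 : Real.exp (θ ^ 2 / 2) ≤ 1 + θ ^ 2 := by
      by_contra! h8
      nlinarith [sq_nonneg θ, mul_nonneg (sq_nonneg θ) (sub_nonneg.2 hθ1)]
    linarith
  have h0 : (R:ℝ) ^ 3 * (Real.cosh θ - 1) ≤ 1 := by nlinarith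
  rw [div_mul_eq_mul_div, div_le_iff₀ (by positivity)]
  have : (1 - 1 / (2 * ((R:ℝ) ^ 3 + 1))) * (((R:ℝ) ^ 3 + 1) * (2 * d)) =
    2 * d * (R:ℝ) ^ 3 + d := by field_simp; ring
  rw [this]
  nlinarith

lemma tsum_succ_geom {q : ℝ} (h0 : 0 ≤ q) (h1 : q < 1) :
    HasSum (fun n : ℕ => ((n:ℝ) + 1) * q ^ n) (1 / (1 - q) ^ 2) := by
  have := hasSum_choose_mul_geometric_of_norm_lt_one (𝕜 := ℝ) 1 (r := q)
    (by rwa [Real.norm_eq_abs, abs_of_nonneg h0])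
  simpa using this

lemma fixed_x {d R : ℕ} (hd : 3 ≤ d) (hR : 1 ≤ R) {u θ : ℝ} (hu : 0 < u)
    (hθ : θ = 1 / (R * Real.sqrt R)) {μ : Measure (W d → ℕ)}
    (h : IsFRI d u (R ^ 3 : ℕ) μ) (x : Fin d → ℤ) :
    ∑' n : ℕ, ∑' s : Fin n → Fin d × Bool,
      μ {ω | (x ∉ box d (128 * R ^ 2) ∧ ∃ i, pth x s i ∈ box d (64 * R ^ 2)) ∧
        ∃ w : W d, w.1 = ⟨n, pth x s⟩ ∧ 1 ≤ ω w} ≤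
    ENNReal.ofReal (8 * d * u * Real.exp (-32 * Real.sqrt R)) *
      ∏ j, ENNReal.ofReal (Real.exp (-(θ / (4 * d)) * |(x j : ℝ)|)) := by
  have hR' : (1:ℝ) ≤ R := by exact_mod_cast hR
  have hd' : (3:ℝ) ≤ d := by exact_mod_cast hd
  have hs : Real.sqrt R ^ 2 = R := Real.sq_sqrt (by positivity)
  have hs0 : 0 < Real.sqrt R := Real.sqrt_pos.2 (by positivity)
  have hθ0 : 0 ≤ θ := by rw [hθ]; positivity
  by_cases hx : x ∈ box d (128 * R ^ 2)
  · simp [hx]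
  have : Nonempty (Fin d) := ⟨⟨0, by omega⟩⟩
  obtain ⟨j, hj⟩ := Finite.exists_max (fun j => |(x j : ℝ)|)
  have hfar : 128 * (R:ℝ) ^ 2 ≤ |(x j : ℝ)| := by
    simp only [box, Set.mem_ofPred_eq, not_forall, not_le] at hx
    obtain ⟨k, hk⟩ := hx
    exact hk.le.trans (hj k)
  set q : ℝ := ((R:ℝ) ^ 3 / (((R:ℝ) ^ 3 + 1) * (2 * d))) * (2 * d + 2 * (Real.cosh θ - 1)) with hq
  have hq1 : q ≤ 1 - 1 / (2 * ((R:ℝ) ^ 3 + 1)) := q_bound hd hR hθ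
  have hq0 : 0 ≤ q := by
    have := Real.one_le_cosh θ
    have : 0 ≤ Real.cosh θ - 1 := by linarith
    positivity
  have hpos : 0 < 1 / (2 * ((R:ℝ) ^ 3 + 1)) := by positivity
  have hsum := tsum_succ_geom hq0 (by linarith : q < 1)
  refine (ENNReal.tsum_le_tsum fun n => fixed_n hu hθ0 h x j).trans ?_
  rw [← hq]
  set K : ℝ := u * (2 * d / ((R:ℝ) ^ 3 + 1) ^ 2)
  set e : ℝ := Real.exp (-θ * (|(x j : ℝ)| - 64 * R ^ 2)) with he
  have hsum2 := (hsum.mul_left K).mul_right e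
  rw [← ENNReal.ofReal_tsum_of_nonneg (fun n => by positivity) hsum2.summable, hsum2.tsum_eq,
    ← ENNReal.ofReal_prod_of_nonneg (fun _ _ => (exp_pos _).le),
    ← ENNReal.ofReal_mul (by positivity), ← Real.exp_sum, mul_assoc (8 * (d:ℝ) * u), ← Real.exp_add]
  apply ENNReal.ofReal_le_ofReal
  have hA : K * (1 / (1 - q) ^ 2) ≤ 8 * d * u := by
    have h1 : 1 / (1 - q) ^ 2 ≤ 1 / (1 / (2 * ((R:ℝ) ^ 3 + 1))) ^ 2 := by
      apply one_div_le_one_div_of_le (by positivity)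
      exact pow_le_pow_left₀ hpos.le (by linarith) 2
    refine (mul_le_mul_of_nonneg_left h1 (by positivity)).trans (le_of_eq ?_)
    simp only [K]
    field_simp
    ring
  refine mul_le_mul hA ?_ (exp_pos _).le (by positivity)
  rw [he]
  apply Real.exp_le_exp.2
  have hsq : θ * (R:ℝ) ^ 2 = Real.sqrt R := by
    rw [hθ]; field_simp; rw [hs]
  have hB : ∑ k, -(θ / (4 * d)) * |(x k : ℝ)| ≥ -(θ / 4) * |(x j : ℝ)| := by
    rw [← Finset.mul_sum]
    have h1 : ∑ k, |(x k : ℝ)| ≤ d * |(x j : ℝ)| := by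
      refine (Finset.sum_le_sum fun k _ => hj k).trans ?_
      simp
    have h2 := mul_le_mul_of_nonneg_left h1 (by positivity : 0 ≤ θ / (4 * d))
    have h3 : θ / (4 * d) * (d * |(x j : ℝ)|) = θ / 4 * |(x j : ℝ)| := by field_simp
    linarith
  nlinarith [mul_le_mul_of_nonneg_left hfar hθ0]

lemma bad_bound {d R : ℕ} (hd : 3 ≤ d) (hR : 1 ≤ R) {u : ℝ} (hu : 0 < u) {μ : Measure (W d → ℕ)}
    (h : IsFRI d u (R ^ 3 : ℕ) μ) :
    μ {ω | BadEvent d R ω} ≤ ENNReal.ofReal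
      (8 * d * u * Real.exp (-32 * Real.sqrt R) * (16 * d * (R:ℝ) ^ 2) ^ d) := by
  have hR' : (1:ℝ) ≤ R := by exact_mod_cast hR
  have hd' : (3:ℝ) ≤ d := by exact_mod_cast hd
  have hs1 : 1 ≤ Real.sqrt R := Real.one_le_sqrt.2 hR'
  have hsR : Real.sqrt R ≤ R := Real.sqrt_le_self_iff.2 (Or.inr hR')
  obtain ⟨θ, hθ⟩ : ∃ θ : ℝ, θ = 1 / (R * Real.sqrt R) := ⟨_, rfl⟩
  have hθ0 : 0 < θ := by rw [hθ]; positivity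
  have hθ1 : θ ≤ 1 := by
    rw [hθ, div_le_one (by positivity)]; nlinarith
  refine (measure_mono (bad_subset d R)).trans ?_
  refine (measure_iUnion_le _).trans ?_
  refine (ENNReal.tsum_le_tsum fun x => (measure_iUnion_le _).trans
    ((ENNReal.tsum_le_tsum fun n => measure_iUnion_le _).trans (fixed_x hd hR hu hθ h x))).trans ?_
  rw [ENNReal.tsum_mul_left,
    tsum_pi (fun z : ℤ => ENNReal.ofReal (Real.exp (-(θ / (4 * d)) * |(z : ℝ)|))),
    ENNReal.ofReal_mul (p := 8 * d * u * Real.exp (-32 * Real.sqrt R)) (by positivity),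
    ENNReal.ofReal_pow (by positivity)]
  gcongr
  refine (tsum_int_exp (θ / (4 * d)) (by positivity) ?_).trans (ENNReal.ofReal_le_ofReal ?_)
  · rw [div_le_one (by positivity)]; linarith
  · have : 4 / (θ / (4 * d)) = 16 * d * (R * Real.sqrt R) := by
      rw [hθ]; field_simp; norm_num
    rw [this]
    gcongr
    nlinarith

/-- The general term of the bound, with the constants chosen. -/
lemma term_bound {d R : ℕ} (hR : 1 ≤ R) {u c : ℝ} (hu : 0 < u) (hc : 0 < c) (m : ℕ) :
    (c * (m + 1 : ℝ) ^ d * (R : ℝ) ^ (2 * d) * 1 * Real.exp (-1 * (m + 1) * R) +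
           c * (m + 1 : ℝ) ^ d * (R : ℝ) ^ (2 * d) *
             (2 * d * u * (m + 1) * (R : ℝ) ^ 4 / ((R : ℝ) ^ 3 + 1)) *
             Real.exp (-1 * (m + 1) * Real.sqrt R)) ≤
      (c * (1 + 2 * d * u) * ((R:ℝ) ^ (2 * d + 4) * Real.exp (-(1 / 2) * Real.sqrt R))) *
        ((m + 1 : ℝ) ^ (d + 1) * Real.exp (-(1 / 2) * (m + 1))) := by
  have hR' : (1:ℝ) ≤ R := by exact_mod_cast hR
  have hs1 : 1 ≤ Real.sqrt R := Real.one_le_sqrt.2 hR'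
  have hsR : Real.sqrt R ≤ R := Real.sqrt_le_self_iff.2 (Or.inr hR')
  have hm : (0:ℝ) ≤ m := Nat.cast_nonneg m
  have hm1 : (1:ℝ) ≤ (m:ℝ) + 1 := by linarith
  set E := Real.exp (-(1 / 2) * Real.sqrt R) * Real.exp (-(1 / 2) * ((m:ℝ) + 1)) with hE
  have e2 : Real.exp (-1 * ((m:ℝ) + 1) * Real.sqrt R) ≤ E := by
    rw [hE, ← Real.exp_add]
    apply Real.exp_le_exp.2
    nlinarith
  have e1 : Real.exp (-1 * ((m:ℝ) + 1) * R) ≤ E := by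
    refine le_trans (Real.exp_le_exp.2 ?_) e2
    nlinarith
  have hE0 : 0 ≤ E := by positivity
  have hfrac : 2 * d * u * ((m:ℝ) + 1) * (R : ℝ) ^ 4 / ((R : ℝ) ^ 3 + 1) ≤
      2 * d * u * ((m:ℝ) + 1) * (R:ℝ) ^ 4 := by
    apply div_le_self (by positivity)
    have : 0 ≤ (R:ℝ) ^ 3 := by positivity
    linarith
  have hp : (1:ℝ) ≤ ((m:ℝ) + 1) * (R:ℝ) ^ 4 := one_le_mul_of_one_le_of_one_le hm1 (one_le_pow₀ hR')
  calc _ ≤ c * (m + 1 : ℝ) ^ d * (R : ℝ) ^ (2 * d) * (((m:ℝ) + 1) * (R:ℝ) ^ 4) * E +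
        c * (m + 1 : ℝ) ^ d * (R : ℝ) ^ (2 * d) * (2 * d * u * ((m:ℝ) + 1) * (R:ℝ) ^ 4) * E := by
        gcongr
    _ = _ := by rw [hE]; ring

lemma summable_g (d : ℕ) :
    Summable fun m : ℕ => ((m + 1 : ℝ) ^ (d + 1) * Real.exp (-(1 / 2) * (m + 1))) := by
  have := Real.summable_pow_mul_exp_neg_nat_mul (d + 1) (by norm_num : (0:ℝ) < 1 / 2)
  have := (summable_nat_add_iff 1).2 this
  simpa using this

lemma tendsto_h (k : ℕ) :
    Tendsto (fun R : ℕ => (R:ℝ) ^ k * Real.exp (-(1 / 2) * Real.sqrt R)) atTop (nhds 0) := by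
  have h := tendsto_rpow_mul_exp_neg_mul_atTop_nhds_zero ((2 * k : ℕ) : ℝ) (1 / 2) (by norm_num)
  have h2 : Tendsto (fun R : ℕ => Real.sqrt R) atTop atTop :=
    Real.tendsto_sqrt_atTop.comp tendsto_natCast_atTop_atTop
  refine (h.comp h2).congr fun R => ?_
  simp only [Function.comp, Real.rpow_natCast]
  rw [pow_mul, Real.sq_sqrt (Nat.cast_nonneg R)]

/-- Union bound for walks from far away reaching `B̂(R)` in `FI^{u,R³}`: there are positive
constants `c₁, …, c₄` (depending on `u, d`) such that for every `R ≥ 1` the probability that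
some killed walk starting in `ℤ^d ∖ B(128R²)` reaches `B̂(R)` is at most
`Σ_{m≥1} (c₄ m^d R^{2d} c₁ e^{-c₂ m R} + c₄ m^d R^{2d} (2dumR⁴/(R³+1)) e^{-c₃ m R^{1/2}})`,
and this bound tends to `0` as `R → ∞`. -/
theorem fri_no_far_walks (d : ℕ) (hd : 3 ≤ d) (u : ℝ) (hu : 0 < u) :
    ∃ c₁ > (0 : ℝ), ∃ c₂ > (0 : ℝ), ∃ c₃ > (0 : ℝ), ∃ c₄ > (0 : ℝ),
      (∀ R : ℕ, 1 ≤ R → ∀ μ : Measure (W d → ℕ), IsFRI d u (R ^ 3 : ℕ) μ →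
        μ {ω | BadEvent d R ω} ≤ ENNReal.ofReal (∑' m : ℕ,
          (c₄ * (m + 1 : ℝ) ^ d * (R : ℝ) ^ (2 * d) * c₁ * Real.exp (-c₂ * (m + 1) * R) +
           c₄ * (m + 1 : ℝ) ^ d * (R : ℝ) ^ (2 * d) *
             (2 * d * u * (m + 1) * (R : ℝ) ^ 4 / ((R : ℝ) ^ 3 + 1)) *
             Real.exp (-c₃ * (m + 1) * Real.sqrt R)))) ∧
      Tendsto (fun R : ℕ => ∑' m : ℕ,
          (c₄ * (m + 1 : ℝ) ^ d * (R : ℝ) ^ (2 * d) * c₁ * Real.exp (-c₂ * (m + 1) * R) +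
           c₄ * (m + 1 : ℝ) ^ d * (R : ℝ) ^ (2 * d) *
             (2 * d * u * (m + 1) * (R : ℝ) ^ 4 / ((R : ℝ) ^ 3 + 1)) *
             Real.exp (-c₃ * (m + 1) * Real.sqrt R)))
        atTop (nhds 0) := by
  have hd' : (3:ℝ) ≤ d := by exact_mod_cast hd
  have hc : (0:ℝ) < 8 * (16 * d) ^ d := by positivity
  have hnn : ∀ R m : ℕ, 0 ≤ (8 * (16 * (d:ℝ)) ^ d * (m + 1 : ℝ) ^ d * (R : ℝ) ^ (2 * d) * 1 *
      Real.exp (-1 * (m + 1) * R) + 8 * (16 * (d:ℝ)) ^ d * (m + 1 : ℝ) ^ d * (R : ℝ) ^ (2 * d) *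
             (2 * d * u * (m + 1) * (R : ℝ) ^ 4 / ((R : ℝ) ^ 3 + 1)) *
             Real.exp (-1 * (m + 1) * Real.sqrt R)) := fun R m => by positivity
  have hsm : ∀ R : ℕ, 1 ≤ R → Summable fun m : ℕ => (8 * (16 * (d:ℝ)) ^ d * (m + 1 : ℝ) ^ d *
      (R : ℝ) ^ (2 * d) * 1 *
      Real.exp (-1 * (m + 1) * R) + 8 * (16 * (d:ℝ)) ^ d * (m + 1 : ℝ) ^ d * (R : ℝ) ^ (2 * d) *
             (2 * d * u * (m + 1) * (R : ℝ) ^ 4 / ((R : ℝ) ^ 3 + 1)) *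
             Real.exp (-1 * (m + 1) * Real.sqrt R)) := fun R hR =>
    Summable.of_nonneg_of_le (hnn R) (term_bound hR hu hc) ((summable_g d).mul_left _)
  refine ⟨1, one_pos, 1, one_pos, 1, one_pos, 8 * (16 * d) ^ d, hc, ?_, ?_⟩
  · intro R hR μ h
    have hR' : (1:ℝ) ≤ R := by exact_mod_cast hR
    refine (bad_bound hd hR hu h).trans (ENNReal.ofReal_le_ofReal ?_)
    refine le_trans ?_ ((hsm R hR).le_tsum 0 fun m _ => hnn R m)
    refine le_trans ?_ (le_add_of_nonneg_left (by positivity))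
    have hfrac : (d:ℝ) * u ≤ 2 * d * u * (((0:ℕ):ℝ) + 1) * (R : ℝ) ^ 4 / ((R : ℝ) ^ 3 + 1) := by
      rw [le_div_iff₀ (by positivity)]
      have h1 : (1:ℝ) ≤ (R:ℝ) ^ 3 := one_le_pow₀ hR'
      have h2 : (R:ℝ) ^ 3 + 1 ≤ 2 * (R:ℝ) ^ 4 := by nlinarith
      have h3 := mul_le_mul_of_nonneg_left h2 (by positivity : 0 ≤ (d:ℝ) * u)
      push_cast
      linarith
    have hexp : Real.exp (-32 * Real.sqrt R) ≤ Real.exp (-1 * (((0:ℕ):ℝ) + 1) * Real.sqrt R) := by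
      apply Real.exp_le_exp.2
      have := Real.sqrt_nonneg R
      push_cast
      linarith
    calc _ = 8 * (16 * (d:ℝ)) ^ d * (((0:ℕ):ℝ) + 1) ^ d * (R : ℝ) ^ (2 * d) * (d * u) *
          Real.exp (-32 * Real.sqrt R) := by
          rw [mul_pow _ ((R:ℝ) ^ 2), ← pow_mul]
          simp
          ring
      _ ≤ _ := by gcongr
  · have hlim := ((tendsto_h (2 * d + 4)).const_mul (8 * (16 * (d:ℝ)) ^ d * (1 + 2 * d * u))).mul_const
      (∑' m : ℕ, ((m + 1 : ℝ) ^ (d + 1) * Real.exp (-(1 / 2) * (m + 1))))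
    rw [mul_zero, zero_mul] at hlim
    refine squeeze_zero' (Eventually.of_forall fun R => tsum_nonneg (hnn R)) ?_ hlim
    filter_upwards [eventually_ge_atTop 1] with R hR
    rw [← tsum_mul_left]
    exact (hsm R hR).tsum_le_tsum (term_bound hR hu hc) ((summable_g d).mul_left _)

end
end
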